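/- arXiv:1111.1453 — 15 statements merged into one kernel-verified Lean document; each statement's English description precedes it below -/
import Mathlib

section
/- Let (Ω, 𝒜, μ) be a probability space, J an interval of reals, and W : Ω → J a measurable random variable. Let g₁, g₂ : J → ℝ be nondecreasing functions such that g₁ single crosses g₂ from below at some w₀ ∈ J, and let h : ℝ → ℝ be concave. Assume g₁∘W, g₂∘W, h∘g₁∘W and h∘g₂∘W are all integrable. If E[g₁(W)] = E[g₂(W)], then E[h(g₁(W))] ≤ E[h(g₂(W))]. -/
open MeasureTheory

/-- A concave function on the line has a supergradient slope at each point, which compares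
increments on either side of the point. -/
lemma exists_slope_aux (h : ℝ → ℝ) (hconc : ConcaveOn ℝ Set.univ h) (c : ℝ) :
    ∃ s : ℝ, (∀ x y, x ≤ y → y ≤ c → h x - h y ≤ s * (x - y)) ∧
      (∀ x y, c ≤ y → y ≤ x → h x - h y ≤ s * (x - y)) := by
  have key : ∀ x y z : ℝ, x < y → y < z →
      (h z - h y) / (z - y) ≤ (h y - h x) / (y - x) := fun x y z hxy hyz =>
    hconc.slope_anti_adjacent (Set.mem_univ x) (Set.mem_univ z) hxy hyz
  let S : Set ℝ := (fun y => (h c - h y) / (c - y)) '' Set.Iio c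
  have hne : S.Nonempty := ⟨_, c - 1, by simp, rfl⟩
  have hlb : ∀ z, c < z → ∀ t ∈ S, (h z - h c) / (z - c) ≤ t := by
    rintro z hz t ⟨y, hy, rfl⟩
    exact key y c z hy hz
  have hbdd : BddBelow S := ⟨_, fun t ht => hlb (c + 1) (by linarith) t ht⟩
  have hL : ∀ y, y < c → sInf S ≤ (h c - h y) / (c - y) := fun y hy =>
    csInf_le hbdd ⟨y, hy, rfl⟩
  have hR : ∀ z, c < z → (h z - h c) / (z - c) ≤ sInf S := fun z hz =>
    le_csInf hne (hlb z hz)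
  refine ⟨sInf S, fun x y hxy hyc => ?_, fun x y hcy hyx => ?_⟩
  · rcases hxy.eq_or_lt with rfl | hxy
    · simp
    have h1 : sInf S ≤ (h y - h x) / (y - x) := by
      rcases hyc.eq_or_lt with rfl | hyc
      · exact hL x hxy
      · exact (hL y hyc).trans (key x y c hxy hyc)
    rw [le_div_iff₀ (by linarith)] at h1
    linarith
  · rcases hyx.eq_or_lt with rfl | hyx
    · simp
    have h1 : (h x - h y) / (x - y) ≤ sInf S := by
      rcases hcy.eq_or_lt with rfl | hcy
      · exact hR x hyx
      · exact (key c y x hcy hyx).trans (hR y hcy)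
    rwa [div_le_iff₀ (by linarith)] at h1

/-- Ohlin's lemma, part 1: if `g₁` single crosses `g₂` from below (both nondecreasing on the
interval `J`), `h` is concave, and `E[g₁(W)] = E[g₂(W)]`, then
`E[h(g₁(W))] ≤ E[h(g₂(W))]`. -/
theorem ohlin_part_one
    {Ω : Type*} [MeasurableSpace Ω] (μ : Measure Ω) [IsProbabilityMeasure μ]
    (J : Set ℝ) (hJ : J.OrdConnected)
    (W : Ω → ℝ) (hWmeas : Measurable W) (hWJ : ∀ ω, W ω ∈ J)
    (g₁ g₂ : ℝ → ℝ) (hg₁ : MonotoneOn g₁ J) (hg₂ : MonotoneOn g₂ J)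
    (w₀ : ℝ) (hw₀ : w₀ ∈ J)
    (hcross₁ : ∀ w ∈ J, w ≤ w₀ → g₁ w ≤ g₂ w)
    (hcross₂ : ∀ w ∈ J, w₀ ≤ w → g₂ w ≤ g₁ w)
    (h : ℝ → ℝ) (hconc : ConcaveOn ℝ Set.univ h)
    (hint₁ : Integrable (fun ω => g₁ (W ω)) μ)
    (hint₂ : Integrable (fun ω => g₂ (W ω)) μ)
    (hint₃ : Integrable (fun ω => h (g₁ (W ω))) μ)
    (hint₄ : Integrable (fun ω => h (g₂ (W ω))) μ)
    (heq : ∫ ω, g₁ (W ω) ∂μ = ∫ ω, g₂ (W ω) ∂μ) :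
    ∫ ω, h (g₁ (W ω)) ∂μ ≤ ∫ ω, h (g₂ (W ω)) ∂μ := by
  have hc : g₁ w₀ = g₂ w₀ := le_antisymm (hcross₁ w₀ hw₀ le_rfl) (hcross₂ w₀ hw₀ le_rfl)
  obtain ⟨s, hs1, hs2⟩ := exists_slope_aux h hconc (g₂ w₀)
  have hpt : ∀ ω, h (g₁ (W ω)) - h (g₂ (W ω)) ≤ s * (g₁ (W ω) - g₂ (W ω)) := by
    intro ω
    rcases le_total (W ω) w₀ with hw | hw
    · exact hs1 _ _ (hcross₁ _ (hWJ ω) hw) (hg₂ (hWJ ω) hw₀ hw)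
    · exact hs2 _ _ (hg₂ hw₀ (hWJ ω) hw) (hcross₂ _ (hWJ ω) hw)
  have hI := integral_mono (hint₃.sub hint₄) ((hint₁.sub hint₂).const_mul s) hpt
  simp only [Pi.sub_apply] at hI
  rw [integral_const_mul, integral_sub hint₃ hint₄, integral_sub hint₁ hint₂, heq] at hI
  linarith
end

section
/- Let (Ω, 𝒜, μ) be a probability space, J an interval of reals, and W : Ω → J a measurable random variable. Let g₁, g₂ : J → ℝ be nondecreasing functions such that g₁ single crosses g₂ from below at some w₀ ∈ J, and let h : ℝ → ℝ be concave. Assume g₁∘W, g₂∘W, h∘g₁∘W and h∘g₂∘W are all integrable. If E[h(g₁(W))] = E[h(g₂(W))] and the right derivative of h at the point g₁(w₀) is strictly positive, then E[g₁(W)] ≥ E[g₂(W)]. -/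
open MeasureTheory

lemma convex_slope_aux (f : ℝ → ℝ) (hf : ConvexOn ℝ Set.univ f) (a x y : ℝ) (hxy : x ≤ y) :
    (a ≤ x → derivWithin f (Set.Ioi a) a * (y - x) ≤ f y - f x) ∧
    (y ≤ a → f y - f x ≤ derivWithin f (Set.Ioi a) a * (y - x)) := by
  have hi : ∀ z : ℝ, z ∈ interior (Set.univ : Set ℝ) := fun z => by simp
  rcases hxy.eq_or_lt with rfl | hlt
  · simp
  have hpos : 0 < y - x := sub_pos.2 hlt
  have hm := hf.monotoneOn_rightDeriv
  constructor
  · intro h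
    have h1 := hm (hi a) (hi x) h
    have h2 := hf.rightDeriv_le_slope_of_mem_interior (hi x) (Set.mem_univ y) hlt
    have h3 := h1.trans h2
    rw [slope_def_field, le_div_iff₀ hpos] at h3
    exact h3
  · intro h
    have h1 := hm (hi y) (hi a) h
    have h2 := hf.slope_le_leftDeriv_of_mem_interior (Set.mem_univ x) (hi y) hlt
    have h3 := (h2.trans (hf.leftDeriv_le_rightDeriv_of_mem_interior (hi y))).trans h1
    rw [slope_def_field, div_le_iff₀ hpos] at h3
    exact h3

/-- Ohlin-type lemma, part 2: if `g₁` single crosses `g₂` from below (both nondecreasing on the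
interval `J`), `h` is concave, `E[h(g₁(W))] = E[h(g₂(W))]`, and the right derivative of `h`
at `g₁(w₀)` is strictly positive, then `E[g₁(W)] ≥ E[g₂(W)]`. -/
theorem ohlin_part_two
    {Ω : Type*} [MeasurableSpace Ω] (μ : Measure Ω) [IsProbabilityMeasure μ]
    (J : Set ℝ) (hJ : J.OrdConnected)
    (W : Ω → ℝ) (hWmeas : Measurable W) (hWJ : ∀ ω, W ω ∈ J)
    (g₁ g₂ : ℝ → ℝ) (hg₁ : MonotoneOn g₁ J) (hg₂ : MonotoneOn g₂ J)
    (w₀ : ℝ) (hw₀ : w₀ ∈ J)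
    (hcross₁ : ∀ w ∈ J, w ≤ w₀ → g₁ w ≤ g₂ w)
    (hcross₂ : ∀ w ∈ J, w₀ ≤ w → g₂ w ≤ g₁ w)
    (h : ℝ → ℝ) (hconc : ConcaveOn ℝ Set.univ h)
    (hint₁ : Integrable (fun ω => g₁ (W ω)) μ)
    (hint₂ : Integrable (fun ω => g₂ (W ω)) μ)
    (hint₃ : Integrable (fun ω => h (g₁ (W ω))) μ)
    (hint₄ : Integrable (fun ω => h (g₂ (W ω))) μ)
    (heq : ∫ ω, h (g₁ (W ω)) ∂μ = ∫ ω, h (g₂ (W ω)) ∂μ)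
    (hderiv : 0 < derivWithin h (Set.Ioi (g₁ w₀)) (g₁ w₀)) :
    ∫ ω, g₂ (W ω) ∂μ ≤ ∫ ω, g₁ (W ω) ∂μ := by
  have h0 : g₁ w₀ = g₂ w₀ := le_antisymm (hcross₁ _ hw₀ le_rfl) (hcross₂ _ hw₀ le_rfl)
  set d := derivWithin h (Set.Ioi (g₁ w₀)) (g₁ w₀) with hd
  have hneg : derivWithin (-h) (Set.Ioi (g₁ w₀)) (g₁ w₀) = -d := by
    rw [derivWithin.neg]
  have key : ∀ ω, h (g₁ (W ω)) - h (g₂ (W ω)) ≤ d * (g₁ (W ω) - g₂ (W ω)) := by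
    intro ω
    rcases le_total (W ω) w₀ with hw | hw
    · have := (convex_slope_aux (-h) hconc.neg (g₁ w₀) _ _ (hcross₁ _ (hWJ ω) hw)).2
        (h0 ▸ hg₂ (hWJ ω) hw₀ hw)
      rw [hneg] at this
      simp only [Pi.neg_apply] at this
      linarith
    · have := (convex_slope_aux (-h) hconc.neg (g₁ w₀) _ _ (hcross₂ _ (hWJ ω) hw)).1
        (h0 ▸ hg₂ hw₀ (hWJ ω) hw)
      rw [hneg] at this
      simp only [Pi.neg_apply] at this
      linarith
  have hI := integral_mono (hint₃.sub hint₄) ((hint₁.sub hint₂).const_mul d) key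
  simp only [Pi.sub_apply] at hI
  rw [integral_sub hint₃ hint₄, integral_const_mul, integral_sub hint₁ hint₂, heq, sub_self] at hI
  have := nonneg_of_mul_nonneg_right hI hderiv
  linarith
end

section
/- Let (Ω, 𝒜, μ) be a probability space, J an interval of reals, and W : Ω → J a measurable random variable. Let g₁, g₂ : J → ℝ be nondecreasing functions such that g₁ single crosses g₂ from below at some w₀ ∈ J, and let h : ℝ → ℝ be concave. Assume g₁∘W, g₂∘W, h∘g₁∘W and h∘g₂∘W are all integrable. Then E[h(g₁(W))] − E[h(g₂(W))] ≤ h'₊(g₁(w₀)) · ( E[g₁(W)] − E[g₂(W)] ), where h'₊ denotes the right derivative of h. -/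
open MeasureTheory

/-- Key inequality in the proof of Ohlin's lemma: if `g₁` single crosses `g₂` from below
(both nondecreasing on the interval `J`) and `h` is concave, then
`E[h(g₁(W))] − E[h(g₂(W))] ≤ h'₊(g₁(w₀)) · (E[g₁(W)] − E[g₂(W)])`, where `h'₊` denotes
the right derivative of `h`. -/
theorem ohlin_key_inequality
    {Ω : Type*} [MeasurableSpace Ω] (μ : Measure Ω) [IsProbabilityMeasure μ]
    (J : Set ℝ) (hJ : J.OrdConnected)
    (W : Ω → ℝ) (hWmeas : Measurable W) (hWJ : ∀ ω, W ω ∈ J)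
    (g₁ g₂ : ℝ → ℝ) (hg₁ : MonotoneOn g₁ J) (hg₂ : MonotoneOn g₂ J)
    (w₀ : ℝ) (hw₀ : w₀ ∈ J)
    (hcross₁ : ∀ w ∈ J, w ≤ w₀ → g₁ w ≤ g₂ w)
    (hcross₂ : ∀ w ∈ J, w₀ ≤ w → g₂ w ≤ g₁ w)
    (h : ℝ → ℝ) (hconc : ConcaveOn ℝ Set.univ h)
    (hint₁ : Integrable (fun ω => g₁ (W ω)) μ)
    (hint₂ : Integrable (fun ω => g₂ (W ω)) μ)
    (hint₃ : Integrable (fun ω => h (g₁ (W ω))) μ)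
    (hint₄ : Integrable (fun ω => h (g₂ (W ω))) μ) :
    (∫ ω, h (g₁ (W ω)) ∂μ) - (∫ ω, h (g₂ (W ω)) ∂μ) ≤
      derivWithin h (Set.Ioi (g₁ w₀)) (g₁ w₀) *
        ((∫ ω, g₁ (W ω) ∂μ) - (∫ ω, g₂ (W ω) ∂μ)) := by
  have key : ∀ ω, h (g₁ (W ω)) - h (g₂ (W ω)) ≤
      derivWithin h (Set.Ioi (g₁ w₀)) (g₁ w₀) * (g₁ (W ω) - g₂ (W ω)) := by
    intro ω
    have e : g₁ w₀ = g₂ w₀ := le_antisymm (hcross₁ _ hw₀ le_rfl) (hcross₂ _ hw₀ le_rfl)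
    have hf : ConvexOn ℝ Set.univ (-h) := hconc.neg
    have hd : derivWithin (-h) (Set.Ioi (g₁ w₀)) (g₁ w₀)
        = - derivWithin h (Set.Ioi (g₁ w₀)) (g₁ w₀) := derivWithin.neg
    have hmono := hf.monotoneOn_rightDeriv
    rw [interior_univ] at hmono
    have hi : ∀ x : ℝ, x ∈ interior (Set.univ : Set ℝ) := by simp
    have hu : ∀ x : ℝ, x ∈ (Set.univ : Set ℝ) := Set.mem_univ
    rcases le_total (W ω) w₀ with hw | hw
    · have h1 := hcross₁ _ (hWJ ω) hw
      have h2 := hg₂ (hWJ ω) hw₀ hw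
      rcases h1.eq_or_lt with h1 | h1
      · simp [h1]
      · have a := hf.slope_le_leftDeriv_of_mem_interior (hu _) (hi _) h1
        have b := hf.leftDeriv_le_rightDeriv_of_mem_interior (hi (g₂ (W ω)))
        have c := hmono (hu (g₂ (W ω))) (hu (g₁ w₀)) (by linarith)
        simp only at c
        have d := (a.trans b).trans c
        rw [hd, slope_def_field, div_le_iff₀ (by linarith)] at d
        simp only [Pi.neg_apply] at d
        linarith
    · have h1 := hcross₂ _ (hWJ ω) hw
      have h2 := hg₂ hw₀ (hWJ ω) hw
      rcases h1.eq_or_lt with h1 | h1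
      · simp [h1]
      · have a := hf.rightDeriv_le_slope_of_mem_interior (hi _) (hu _) h1
        have c := hmono (hu (g₁ w₀)) (hu (g₂ (W ω))) (by linarith)
        simp only at c
        have d := c.trans a
        rw [hd, slope_def_field, le_div_iff₀ (by linarith)] at d
        simp only [Pi.neg_apply] at d
        linarith
  rw [← integral_sub hint₃ hint₄, ← integral_sub hint₁ hint₂, ← integral_const_mul]
  exact integral_mono (hint₃.sub hint₄) ((hint₁.sub hint₂).const_mul _) key
end

section
/- Let (Ω, 𝒜, μ) be a probability space, J an interval of reals, and W : Ω → J a measurable random variable. Let g₁, g₂ : J → ℝ be nondecreasing functions such that g₁ single crosses g₂ from below at some w₀ ∈ J, and set t₀ = g₁(w₀). Define F_i(t) = μ({ω : g_i(W(ω)) ≤ t}) for i = 1, 2. Then F₁(t) ≥ F₂(t) for all t < t₀, and F₁(t) ≤ F₂(t) for all t > t₀. -/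
open MeasureTheory

/-- If `g₁` single crosses `g₂` from below at `w₀` (both nondecreasing on the interval `J`),
then with `t₀ = g₁ w₀` and `Fᵢ(t) = μ {ω | gᵢ(W ω) ≤ t}`, we have `F₁(t) ≥ F₂(t)` for
`t < t₀` and `F₁(t) ≤ F₂(t)` for `t > t₀`. -/
theorem cdf_crossing
    {Ω : Type*} [MeasurableSpace Ω] (μ : Measure Ω) [IsProbabilityMeasure μ]
    (J : Set ℝ) (hJ : J.OrdConnected)
    (W : Ω → ℝ) (hWmeas : Measurable W) (hWJ : ∀ ω, W ω ∈ J)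
    (g₁ g₂ : ℝ → ℝ) (hg₁ : MonotoneOn g₁ J) (hg₂ : MonotoneOn g₂ J)
    (w₀ : ℝ) (hw₀ : w₀ ∈ J)
    (hcross₁ : ∀ w ∈ J, w ≤ w₀ → g₁ w ≤ g₂ w)
    (hcross₂ : ∀ w ∈ J, w₀ ≤ w → g₂ w ≤ g₁ w) :
    (∀ t : ℝ, t < g₁ w₀ → μ {ω | g₂ (W ω) ≤ t} ≤ μ {ω | g₁ (W ω) ≤ t}) ∧
    (∀ t : ℝ, g₁ w₀ < t → μ {ω | g₁ (W ω) ≤ t} ≤ μ {ω | g₂ (W ω) ≤ t}) := by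
  have h₁ := hcross₁ w₀ hw₀ le_rfl
  have h₂ := hcross₂ w₀ hw₀ le_rfl
  refine ⟨fun t ht => measure_mono fun ω hω => ?_, fun t ht => measure_mono fun ω hω => ?_⟩
  · simp only [Set.mem_setOf_eq] at hω ⊢
    rcases le_total (W ω) w₀ with h | h
    · exact (hcross₁ _ (hWJ ω) h).trans hω
    · have := hg₂ hw₀ (hWJ ω) h
      linarith
  · simp only [Set.mem_setOf_eq] at hω ⊢
    rcases le_total (W ω) w₀ with h | h
    · have := hg₂ (hWJ ω) hw₀ h
      linarith
    · exact (hcross₂ _ (hWJ ω) h).trans hω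
end

section
/- Let a < b be reals and let f, f̂ : [a,b] → ℝ be strictly positive functions such that the ratio x ↦ f(x)/f̂(x) is nondecreasing on [a,b]. Let g : [a,b] → ℝ be a function that single crosses zero from below, i.e., there exists w₀ ∈ [a,b] with g(x) ≤ 0 for all x ∈ [a, w₀] and g(x) ≥ 0 for all x ∈ [w₀, b]. Assume g·f and g·f̂ are integrable on [a,b]. If ∫ₐᵇ g(x) f̂(x) dx ≥ 0, then ∫ₐᵇ g(x) f(x) dx ≥ 0. -/
open MeasureTheory

/-- Lemma A.2 of the paper: if the likelihood ratio `f/f̂` is nondecreasing on `[a,b]`, `g`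
single crosses zero from below, and `∫ g f̂ ≥ 0`, then `∫ g f ≥ 0`. -/
theorem likelihood_ratio_single_crossing
    (a b : ℝ) (hab : a < b)
    (f fhat : ℝ → ℝ)
    (hf : ∀ x ∈ Set.Icc a b, 0 < f x)
    (hfhat : ∀ x ∈ Set.Icc a b, 0 < fhat x)
    (hratio : MonotoneOn (fun x => f x / fhat x) (Set.Icc a b))
    (g : ℝ → ℝ)
    (w₀ : ℝ) (hw₀ : w₀ ∈ Set.Icc a b)
    (hg₁ : ∀ x ∈ Set.Icc a w₀, g x ≤ 0)
    (hg₂ : ∀ x ∈ Set.Icc w₀ b, 0 ≤ g x)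
    (hint₁ : IntegrableOn (fun x => g x * f x) (Set.Icc a b))
    (hint₂ : IntegrableOn (fun x => g x * fhat x) (Set.Icc a b))
    (hpos : 0 ≤ ∫ x in Set.Icc a b, g x * fhat x) :
    0 ≤ ∫ x in Set.Icc a b, g x * f x := by
  have hc : 0 ≤ f w₀ / fhat w₀ := (div_pos (hf _ hw₀) (hfhat _ hw₀)).le
  calc (0 : ℝ) ≤ (f w₀ / fhat w₀) * ∫ x in Set.Icc a b, g x * fhat x := mul_nonneg hc hpos
    _ = ∫ x in Set.Icc a b, (f w₀ / fhat w₀) * (g x * fhat x) :=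
        (integral_const_mul _ _).symm
    _ ≤ ∫ x in Set.Icc a b, g x * f x := by
      refine setIntegral_mono_on (hint₂.const_mul _) hint₁ measurableSet_Icc ?_
      intro x hx
      have hp := hfhat x hx
      rcases le_total x w₀ with h | h
      · have h1 : f x / fhat x ≤ f w₀ / fhat w₀ := hratio hx hw₀ h
        rw [div_le_iff₀ hp] at h1
        have h2 := mul_le_mul_of_nonpos_left h1 (hg₁ x ⟨hx.1, h⟩)
        linarith
      · have h1 : f w₀ / fhat w₀ ≤ f x / fhat x := hratio hw₀ hx h
        rw [le_div_iff₀ hp] at h1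
        have h2 := mul_le_mul_of_nonneg_left h1 (hg₂ x ⟨h, hx.2⟩)
        linarith
end

section
/- Let a < b be reals and let f, f̂ : [a,b] → ℝ be strictly positive integrable functions with ∫ₐᵇ f(x) dx = ∫ₐᵇ f̂(x) dx = 1, such that the ratio x ↦ f(x)/f̂(x) is nondecreasing on [a,b]. Then for every x₀ ∈ [a,b], ∫_{x₀}^{b} f(x) dx ≥ ∫_{x₀}^{b} f̂(x) dx; that is, the probability distribution with density f first-order stochastically dominates the one with density f̂. -/
open MeasureTheory

/-- MLR implies FOSD: if `f` and `f̂` are strictly positive probability densities on `[a,b]`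
whose likelihood ratio `f/f̂` is nondecreasing, then the upper-tail mass of `f` dominates
that of `f̂` at every threshold. -/
theorem mlr_implies_fosd
    (a b : ℝ) (hab : a < b)
    (f fhat : ℝ → ℝ)
    (hf : ∀ x ∈ Set.Icc a b, 0 < f x)
    (hfhat : ∀ x ∈ Set.Icc a b, 0 < fhat x)
    (hfint : IntegrableOn f (Set.Icc a b))
    (hfhatint : IntegrableOn fhat (Set.Icc a b))
    (hfone : ∫ x in Set.Icc a b, f x = 1)
    (hfhatone : ∫ x in Set.Icc a b, fhat x = 1)
    (hratio : MonotoneOn (fun x => f x / fhat x) (Set.Icc a b)) :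
    ∀ x₀ ∈ Set.Icc a b, ∫ x in Set.Icc x₀ b, fhat x ≤ ∫ x in Set.Icc x₀ b, f x := by
  intro x₀ hx₀
  obtain ⟨h1, h2⟩ := hx₀
  have hx₀ : x₀ ∈ Set.Icc a b := ⟨h1, h2⟩
  have hsR : Set.Icc x₀ b ⊆ Set.Icc a b := Set.Icc_subset_Icc_left h1
  have hsL : Set.Ico a x₀ ⊆ Set.Icc a b := fun x hx => ⟨hx.1, hx.2.le.trans h2⟩
  rcases le_total 1 (f x₀ / fhat x₀) with h | h
  · refine setIntegral_mono_on (hfhatint.mono_set hsR) (hfint.mono_set hsR)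
      measurableSet_Icc ?_
    intro x hx
    have hr : f x₀ / fhat x₀ ≤ f x / fhat x := hratio hx₀ (hsR hx) hx.1
    exact (one_le_div (hfhat x (hsR hx))).1 (h.trans hr)
  · have hL : ∫ x in Set.Ico a x₀, f x ≤ ∫ x in Set.Ico a x₀, fhat x := by
      refine setIntegral_mono_on (hfint.mono_set hsL) (hfhatint.mono_set hsL)
        measurableSet_Ico ?_
      intro x hx
      have hr : f x / fhat x ≤ f x₀ / fhat x₀ := hratio (hsL hx) hx₀ hx.2.le
      exact (div_le_one (hfhat x (hsL hx))).1 (hr.trans h)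
    have hd : Disjoint (Set.Ico a x₀) (Set.Icc x₀ b) :=
      Set.disjoint_left.2 fun x hx hx' => absurd hx'.1 (not_le.2 hx.2)
    have e1 := setIntegral_union hd measurableSet_Icc (hfint.mono_set hsL) (hfint.mono_set hsR)
    have e2 := setIntegral_union hd measurableSet_Icc (hfhatint.mono_set hsL)
      (hfhatint.mono_set hsR)
    rw [Set.Ico_union_Icc_eq_Icc h1 h2] at e1 e2
    linarith
end

section
/- Let a < b be reals, I ∈ ℝ, and f : [a,b] → ℝ a strictly positive integrable function with ∫ₐᵇ f(x) dx = 1. Let u : ℝ → ℝ be concave and strictly increasing. Let φ, ψ : [a,b] → ℝ be continuous nondecreasing functions such that x ↦ x − φ(x) and x ↦ x − ψ(x) are nondecreasing on [a,b], and such that the difference x ↦ φ(x) − ψ(x) is quasi-monotone on [a,b]. Assume all the integrals below exist. If ∫ₐᵇ u(x − I − φ(x)) f(x) dx = ∫ₐᵇ u(x − I − ψ(x)) f(x) dx, then ∫ₐᵇ φ(x) f(x) dx ≥ ∫ₐᵇ ψ(x) f(x) dx. -/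
open MeasureTheory

/-- A strictly increasing concave function has, at every point `v`, a positive slope `s` which
bounds the secant slopes to the left of `v` from below and those to the right from above. -/
lemma exists_pos_slope (u : ℝ → ℝ) (hu : ConcaveOn ℝ Set.univ u) (hm : StrictMono u) (v : ℝ) :
    ∃ s : ℝ, 0 < s ∧ (∀ x y, x ≤ y → y ≤ v → s * (y - x) ≤ u y - u x) ∧
      (∀ x y, v ≤ x → x ≤ y → u y - u x ≤ s * (y - x)) := by
  have adj : ∀ x y z : ℝ, x < y → y < z → (u z - u y) / (z - y) ≤ (u y - u x) / (y - x) :=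
    fun x y z hxy hyz => hu.slope_anti_adjacent (Set.mem_univ _) (Set.mem_univ _) hxy hyz
  set S : Set ℝ := (fun x => (u v - u x) / (v - x)) '' Set.Iio v with hS
  have hne : S.Nonempty := ⟨_, v - 1, by simp, rfl⟩
  have hlb : ∀ y, v < y → ∀ t ∈ S, (u y - u v) / (y - v) ≤ t := by
    rintro y hy t ⟨x, hx, rfl⟩
    exact adj x v y hx hy
  have hbdd : BddBelow S := ⟨_, hlb (v + 1) (by linarith)⟩
  have hleft : ∀ x, x < v → sInf S ≤ (u v - u x) / (v - x) :=
    fun x hx => csInf_le hbdd ⟨x, hx, rfl⟩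
  have hright : ∀ y, v < y → (u y - u v) / (y - v) ≤ sInf S :=
    fun y hy => le_csInf hne (hlb y hy)
  refine ⟨sInf S, ?_, ?_, ?_⟩
  · refine lt_of_lt_of_le ?_ (hright (v + 1) (by linarith))
    have := hm (show v < v + 1 by linarith)
    exact div_pos (by linarith) (by linarith)
  · intro x y hxy hyv
    rcases hxy.eq_or_lt with rfl | hxy
    · simp
    rw [← le_div_iff₀ (by linarith)]
    rcases hyv.eq_or_lt with rfl | hyv
    · exact hleft x hxy
    · exact (hleft y hyv).trans (adj x y v hxy hyv)
  · intro x y hvx hxy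
    rcases hxy.eq_or_lt with rfl | hxy
    · simp
    rw [← div_le_iff₀ (by linarith)]
    rcases hvx.eq_or_lt with rfl | hvx
    · exact hright y hxy
    · exact (adj v x y hvx hxy).trans (hright x hvx)

/-- If the steeper security `φ` (the difference `φ − ψ` is quasi-monotone) leaves a risk-averse
buyer with the same expected utility as `ψ`, then `φ` yields a weakly larger expected payment. -/
theorem steeper_security_higher_expected_payment
    (a b : ℝ) (hab : a < b) (I : ℝ)
    (f : ℝ → ℝ) (hf : ∀ x ∈ Set.Icc a b, 0 < f x)
    (hfint : IntegrableOn f (Set.Icc a b))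
    (hfone : ∫ x in Set.Icc a b, f x = 1)
    (u : ℝ → ℝ) (huconc : ConcaveOn ℝ Set.univ u) (humono : StrictMono u)
    (φ ψ : ℝ → ℝ)
    (hφcont : ContinuousOn φ (Set.Icc a b)) (hψcont : ContinuousOn ψ (Set.Icc a b))
    (hφmono : MonotoneOn φ (Set.Icc a b)) (hψmono : MonotoneOn ψ (Set.Icc a b))
    (hφprofit : MonotoneOn (fun x => x - φ x) (Set.Icc a b))
    (hψprofit : MonotoneOn (fun x => x - ψ x) (Set.Icc a b))
    (hquasi : ∀ w ∈ Set.Icc a b, ∀ w' ∈ Set.Icc a b, w' < w →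
      0 < φ w' - ψ w' → 0 ≤ φ w - ψ w)
    (hint₁ : IntegrableOn (fun x => u (x - I - φ x) * f x) (Set.Icc a b))
    (hint₂ : IntegrableOn (fun x => u (x - I - ψ x) * f x) (Set.Icc a b))
    (hint₃ : IntegrableOn (fun x => φ x * f x) (Set.Icc a b))
    (hint₄ : IntegrableOn (fun x => ψ x * f x) (Set.Icc a b))
    (heq : ∫ x in Set.Icc a b, u (x - I - φ x) * f x
            = ∫ x in Set.Icc a b, u (x - I - ψ x) * f x) :
    ∫ x in Set.Icc a b, ψ x * f x ≤ ∫ x in Set.Icc a b, φ x * f x := by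
  by_cases hall : ∀ x ∈ Set.Icc a b, ψ x ≤ φ x
  · exact setIntegral_mono_on hint₄ hint₃ measurableSet_Icc
      fun x hx => mul_le_mul_of_nonneg_right (hall x hx) (hf x hx).le
  push Not at hall
  obtain ⟨x₀, hx₀, hlt₀⟩ := hall
  have hpm : ∀ x ∈ Set.Icc a b, ∀ y ∈ Set.Icc a b, x ≤ y → x - I - φ x ≤ y - I - φ y := by
    intro x hx y hy hxy
    have := hφprofit hx hy hxy
    simp only at this
    linarith
  set S : Set ℝ := (fun x => x - I - φ x) '' {x | x ∈ Set.Icc a b ∧ φ x < ψ x} with hS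
  have hne : S.Nonempty := ⟨_, x₀, ⟨hx₀, hlt₀⟩, rfl⟩
  have hbdd : BddAbove S := by
    refine ⟨b - I - φ b, ?_⟩
    rintro _ ⟨x, ⟨hx, -⟩, rfl⟩
    exact hpm x hx b ⟨hab.le, le_rfl⟩ hx.2
  obtain ⟨s, hs, hl, hr⟩ := exists_pos_slope u huconc humono (sSup S)
  have key : ∀ x ∈ Set.Icc a b,
      s * (ψ x * f x - φ x * f x) ≤ u (x - I - φ x) * f x - u (x - I - ψ x) * f x := by
    intro x hx
    have h : s * (ψ x - φ x) ≤ u (x - I - φ x) - u (x - I - ψ x) := by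
      rcases lt_trichotomy (φ x) (ψ x) with h | h | h
      · have := hl (x - I - ψ x) (x - I - φ x) (by linarith) (le_csSup hbdd ⟨x, ⟨hx, h⟩, rfl⟩)
        linarith
      · simp [h]
      · have hv : sSup S ≤ x - I - φ x := by
          apply csSup_le hne
          rintro _ ⟨y, ⟨hy, hyl⟩, rfl⟩
          apply hpm y hy x hx
          by_contra hxy
          have := hquasi y hy x hx (not_le.mp hxy) (by linarith)
          linarith
        have := hr (x - I - φ x) (x - I - ψ x) hv (by linarith)
        linarith
    have := mul_le_mul_of_nonneg_right h (hf x hx).le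
    linarith
  have hI := setIntegral_mono_on ((hint₄.sub hint₃).const_mul s) (hint₁.sub hint₂)
    measurableSet_Icc key
  simp only [Pi.sub_apply] at hI
  rw [integral_const_mul, integral_sub hint₄ hint₃, integral_sub hint₁ hint₂, heq, sub_self] at hI
  by_contra hcon
  have := mul_pos hs (sub_pos.mpr (not_le.mp hcon))
  linarith
end

section
/- Let a < b be reals and I ∈ ℝ. Let f_z, f_y : [a,b] → ℝ be strictly positive integrable functions with ∫ₐᵇ f_z = ∫ₐᵇ f_y = 1 and such that the likelihood ratio x ↦ f_y(x)/f_z(x) is nondecreasing on [a,b]. Let u : ℝ → ℝ be concave and strictly increasing. Let φ, ψ : [a,b] → ℝ be continuous nondecreasing functions such that x ↦ x − φ(x) and x ↦ x − ψ(x) are nondecreasing on [a,b], and such that x ↦ φ(x) − ψ(x) is quasi-monotone on [a,b]. Assume all the integrals below exist. If ∫ₐᵇ u(x − I − φ(x)) f_z(x) dx = 0 = ∫ₐᵇ u(x − I − ψ(x)) f_z(x) dx, then ∫ₐᵇ φ(x) f_y(x) dx ≥ ∫ₐᵇ ψ(x) f_y(x) dx. -/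
open MeasureTheory

lemma supergrad_aux (u : ℝ → ℝ) (hc : ConcaveOn ℝ Set.univ u) (hm : StrictMono u) (t : ℝ) :
    ∃ k : ℝ, 0 < k ∧ (∀ w v, t ≤ w → w ≤ v → u v - u w ≤ k * (v - w)) ∧
      (∀ w v, v ≤ w → w ≤ t → u v - u w ≤ k * (v - w)) := by
  have key : ∀ x y z : ℝ, x < y → y < z → (u z - u y) / (z - y) ≤ (u y - u x) / (y - x) :=
    fun x y z h1 h2 => hc.slope_anti_adjacent (Set.mem_univ _) (Set.mem_univ _) h1 h2
  set S : Set ℝ := Set.image (fun y => (u y - u t) / (y - t)) (Set.Ioi t) with hS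
  have hub : ∀ x < t, ∀ s ∈ S, s ≤ (u t - u x) / (t - x) := by
    rintro x hx s ⟨y, hy, rfl⟩
    exact key x t y hx hy
  have hbdd : BddAbove S := ⟨_, fun s hs => hub (t - 1) (by linarith) s hs⟩
  have hne : S.Nonempty := ⟨_, t + 1, by simp, rfl⟩
  have hR : ∀ y, t < y → (u y - u t) / (y - t) ≤ sSup S := fun y hy =>
    le_csSup hbdd ⟨y, hy, rfl⟩
  have hL : ∀ x, x < t → sSup S ≤ (u t - u x) / (t - x) := fun x hx =>
    csSup_le hne (hub x hx)
  refine ⟨sSup S, ?_, ?_, ?_⟩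
  · refine lt_of_lt_of_le ?_ (hR (t + 1) (by linarith))
    have := hm (show t < t + 1 by linarith)
    simp only [add_sub_cancel_left, div_one]
    linarith
  · intro w v h1 h2
    rcases h2.eq_or_lt with rfl | h2
    · simp
    rw [← div_le_iff₀ (by linarith)]
    rcases h1.eq_or_lt with rfl | h1
    · exact hR v h2
    · exact (key t w v h1 h2).trans (hR w h1)
  · intro w v h1 h2
    rcases h1.eq_or_lt with rfl | h1
    · simp
    have : sSup S ≤ (u w - u v) / (w - v) := by
      rcases h2.eq_or_lt with rfl | h2
      · exact hL v h1
      · exact (hL w h2).trans (key v w t h1 h2)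
    rw [le_div_iff₀ (by linarith)] at this
    linarith

/-- Ex-post form of the revenue ranking under PD-MLR (Proposition 3.1): with break-even bids
at the density `f_z` and a nondecreasing likelihood ratio `f_y / f_z`, the steeper security
`φ` yields a weakly larger expected payment under the density `f_y`. -/
theorem revenue_ranking_steepness_mlr
    (a b : ℝ) (hab : a < b) (I : ℝ)
    (fz fy : ℝ → ℝ)
    (hfz : ∀ x ∈ Set.Icc a b, 0 < fz x) (hfy : ∀ x ∈ Set.Icc a b, 0 < fy x)
    (hfzint : IntegrableOn fz (Set.Icc a b)) (hfyint : IntegrableOn fy (Set.Icc a b))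
    (hfzone : ∫ x in Set.Icc a b, fz x = 1) (hfyone : ∫ x in Set.Icc a b, fy x = 1)
    (hratio : MonotoneOn (fun x => fy x / fz x) (Set.Icc a b))
    (u : ℝ → ℝ) (huconc : ConcaveOn ℝ Set.univ u) (humono : StrictMono u)
    (φ ψ : ℝ → ℝ)
    (hφcont : ContinuousOn φ (Set.Icc a b)) (hψcont : ContinuousOn ψ (Set.Icc a b))
    (hφmono : MonotoneOn φ (Set.Icc a b)) (hψmono : MonotoneOn ψ (Set.Icc a b))
    (hφprofit : MonotoneOn (fun x => x - φ x) (Set.Icc a b))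
    (hψprofit : MonotoneOn (fun x => x - ψ x) (Set.Icc a b))
    (hquasi : ∀ w ∈ Set.Icc a b, ∀ w' ∈ Set.Icc a b, w' < w →
      0 < φ w' - ψ w' → 0 ≤ φ w - ψ w)
    (hint₁ : IntegrableOn (fun x => u (x - I - φ x) * fz x) (Set.Icc a b))
    (hint₂ : IntegrableOn (fun x => u (x - I - ψ x) * fz x) (Set.Icc a b))
    (hint₃ : IntegrableOn (fun x => φ x * fz x) (Set.Icc a b))
    (hint₄ : IntegrableOn (fun x => ψ x * fz x) (Set.Icc a b))
    (hint₅ : IntegrableOn (fun x => φ x * fy x) (Set.Icc a b))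
    (hint₆ : IntegrableOn (fun x => ψ x * fy x) (Set.Icc a b))
    (heqφ : ∫ x in Set.Icc a b, u (x - I - φ x) * fz x = 0)
    (heqψ : ∫ x in Set.Icc a b, u (x - I - ψ x) * fz x = 0) :
    ∫ x in Set.Icc a b, ψ x * fy x ≤ ∫ x in Set.Icc a b, φ x * fy x := by
  have hIcc : MeasurableSet (Set.Icc a b) := measurableSet_Icc
  rw [← sub_nonneg, ← integral_sub hint₅ hint₆]
  by_cases hpos : ∀ x ∈ Set.Icc a b, ψ x ≤ φ x
  · refine setIntegral_nonneg hIcc fun x hx => ?_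
    have := mul_le_mul_of_nonneg_right (hpos x hx) (hfy x hx).le
    linarith
  have hU0 : ∫ x in Set.Icc a b, (u (x - I - ψ x) * fz x - u (x - I - φ x) * fz x) = 0 := by
    rw [integral_sub hint₂ hint₁, heqφ, heqψ, sub_zero]
  by_cases hneg : ∀ x ∈ Set.Icc a b, φ x ≤ ψ x
  · have hU1 : ∫ x in Set.Icc a b, (u (x - I - φ x) * fz x - u (x - I - ψ x) * fz x) = 0 := by
      rw [integral_sub hint₁ hint₂, heqφ, heqψ, sub_zero]
    have hae := (setIntegral_eq_zero_iff_of_nonneg_ae ?_ (hint₁.sub hint₂)).1 hU1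
    · refine integral_nonneg_of_ae ?_
      filter_upwards [hae, ae_restrict_mem hIcc] with x h0 hx
      have h1 : (u (x - I - φ x) - u (x - I - ψ x)) * fz x = 0 := by
        have h0' : u (x - I - φ x) * fz x - u (x - I - ψ x) * fz x = 0 := h0
        linarith
      rcases mul_eq_zero.1 h1 with h | h
      · have h2 := humono.injective (sub_eq_zero.1 h)
        have h3 : φ x = ψ x := by linarith
        simp [h3]
      · exact absurd h (hfz x hx).ne'
    · filter_upwards [ae_restrict_mem hIcc] with x hx
      have h1 : u (x - I - ψ x) ≤ u (x - I - φ x) :=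
        humono.monotone (by linarith [hneg x hx])
      have := mul_le_mul_of_nonneg_right h1 (hfz x hx).le
      simp only [Pi.zero_apply, Pi.sub_apply]
      linarith
  push Not at hpos hneg
  obtain ⟨p, hp, hpD⟩ := hpos
  obtain ⟨q, hq, hqD⟩ := hneg
  set S : Set ℝ := {x | x ∈ Set.Icc a b ∧ ψ x < φ x} with hS
  have hpS : ∀ x ∈ S, p ≤ x := by
    intro x hx
    by_contra! h
    have := hquasi p hp x hx.1 h (by linarith [hx.2])
    linarith
  have hSb : BddBelow S := ⟨p, hpS⟩
  have hSn : S.Nonempty := ⟨q, hq, hqD⟩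
  set c := sInf S with hc
  have hpc : p ≤ c := le_csInf hSn hpS
  have hcq : c ≤ q := csInf_le hSb ⟨hq, hqD⟩
  have hcI : c ∈ Set.Icc a b := ⟨hp.1.trans hpc, hcq.trans hq.2⟩
  have hleft : ∀ x ∈ Set.Icc a b, x < c → φ x ≤ ψ x := by
    intro x hx hxc
    by_contra! h
    exact absurd (csInf_le hSb (show x ∈ S from ⟨hx, h⟩)) (not_le.2 hxc)
  have hright : ∀ x ∈ Set.Icc a b, c < x → ψ x ≤ φ x := by
    intro x hx hxc
    obtain ⟨y, hy, hyx⟩ := exists_lt_of_csInf_lt hSn hxc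
    have := hquasi x hx y hy.1 hyx (by linarith [hy.2])
    linarith
  have hc1 : ψ c ≤ φ c := by
    have hSI : S ⊆ Set.Icc a b := fun x hx => hx.1
    exact ContinuousWithinAt.closure_le (csInf_mem_closure hSn hSb)
      ((hψcont c hcI).mono hSI) ((hφcont c hcI).mono hSI) (fun y hy => hy.2.le)
  have hpc' : p < c := lt_of_le_of_ne hpc (by rintro h; rw [← h] at hc1; linarith)
  have hc2 : φ c ≤ ψ c := by
    have hSI : Set.Ico p c ⊆ Set.Icc a b := fun x hx => ⟨hp.1.trans hx.1, hx.2.le.trans hcI.2⟩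
    have hcl : c ∈ closure (Set.Ico p c) := by
      rw [closure_Ico hpc'.ne]; exact ⟨hpc, le_rfl⟩
    exact ContinuousWithinAt.closure_le hcl
      ((hφcont c hcI).mono hSI) ((hψcont c hcI).mono hSI) (fun y hy => hleft y (hSI hy) hy.2)
  have hc0 : φ c = ψ c := le_antisymm hc2 hc1
  obtain ⟨k, hk, hkR, hkL⟩ := supergrad_aux u huconc humono (c - I - φ c)
  have hkey : ∀ x ∈ Set.Icc a b,
      u (x - I - ψ x) - u (x - I - φ x) ≤ k * (φ x - ψ x) := by
    intro x hx
    have e : φ x - ψ x = (x - I - ψ x) - (x - I - φ x) := by ring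
    rw [e]
    rcases lt_trichotomy x c with h | h | h
    · have h1 : x - φ x ≤ c - φ c := hφprofit hx hcI h.le
      exact hkL _ _ (by linarith [hleft x hx h]) (by linarith)
    · subst h
      simp [hc0]
    · have h1 : c - φ c ≤ x - φ x := hφprofit hcI hx h.le
      exact hkR _ _ (by linarith) (by linarith [hright x hx h])
  have hr0 : 0 < fy c / fz c := div_pos (hfy c hcI) (hfz c hcI)
  have hD : ∀ x ∈ Set.Icc a b, fy c / fz c * (φ x * fz x - ψ x * fz x) ≤ φ x * fy x - ψ x * fy x := by
    intro x hx
    have hz := hfz x hx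
    have e : fy x = fy x / fz x * fz x := by field_simp
    have : 0 ≤ (φ x - ψ x) * (fy x / fz x - fy c / fz c) := by
      rcases lt_trichotomy x c with h | h | h
      · have h1 : fy x / fz x ≤ fy c / fz c := hratio hx hcI h.le
        exact mul_nonneg_of_nonpos_of_nonpos (by linarith [hleft x hx h]) (by linarith)
      · subst h
        simp
      · have h1 : fy c / fz c ≤ fy x / fz x := hratio hcI hx h.le
        exact mul_nonneg (by linarith [hright x hx h]) (by linarith)
    have h2 := mul_nonneg this hz.le
    have h3 : (φ x - ψ x) * (fy x / fz x - fy c / fz c) * fz x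
        = (φ x - ψ x) * (fy x / fz x * fz x) - fy c / fz c * (φ x * fz x - ψ x * fz x) := by ring
    rw [h3, ← e] at h2
    linarith
  have hA : 0 ≤ ∫ x in Set.Icc a b, k * (φ x * fz x - ψ x * fz x) := by
    rw [← hU0]
    refine setIntegral_mono_on (hint₂.sub hint₁) ((hint₃.sub hint₄).const_mul k) hIcc fun x hx => ?_
    have := mul_le_mul_of_nonneg_right (hkey x hx) (hfz x hx).le
    linarith
  rw [integral_const_mul] at hA
  have hA' := nonneg_of_mul_nonneg_right hA hk
  have hB := setIntegral_mono_on ((hint₃.sub hint₄).const_mul (fy c / fz c)) (hint₅.sub hint₆) hIcc hD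
  rw [integral_const_mul] at hB
  exact (mul_nonneg hr0.le hA').trans hB
end

section
/- Let a < b be reals and I ∈ ℝ. Let f_z, f_y : [a,b] → ℝ be strictly positive integrable functions with ∫ₐᵇ f_z = ∫ₐᵇ f_y = 1 and such that for every t ∈ [a,b], ∫ₜᵇ f_y(x) dx ≥ ∫ₜᵇ f_z(x) dx (first-order stochastic dominance of f_y over f_z). Let u : ℝ → ℝ be concave and strictly increasing. Let φ, ψ : [a,b] → ℝ be continuous nondecreasing functions such that x ↦ x − φ(x) and x ↦ x − ψ(x) are nondecreasing on [a,b], and such that x ↦ φ(x) − ψ(x) is nondecreasing on [a,b]. Assume all the integrals below exist. If ∫ₐᵇ u(x − I − φ(x)) f_z(x) dx = 0 = ∫ₐᵇ u(x − I − ψ(x)) f_z(x) dx, then ∫ₐᵇ φ(x) f_y(x) dx ≥ ∫ₐᵇ ψ(x) f_y(x) dx. -/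
open MeasureTheory

lemma lint_fosd (a b : ℝ) (f : ℝ → ℝ) (hf : ∀ x ∈ Set.Icc a b, 0 < f x)
    (hfi : IntegrableOn f (Set.Icc a b)) (h : ℝ → ℝ) (hc : Continuous h) (h0 : ∀ x, 0 ≤ h x) :
    ENNReal.ofReal (∫ x in Set.Icc a b, h x * f x) =
      ∫⁻ t in Set.Ioi (0:ℝ), ENNReal.ofReal (∫ x in {x | t ≤ h x} ∩ Set.Icc a b, f x) := by
  have hi : IntegrableOn (fun x => h x * f x) (Set.Icc a b) :=
    hfi.continuousOn_mul hc.continuousOn isCompact_Icc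
  have hF : AEMeasurable (fun x => ENNReal.ofReal (f x)) (volume.restrict (Set.Icc a b)) :=
    hfi.aestronglyMeasurable.aemeasurable.ennreal_ofReal
  have key := lintegral_eq_lintegral_meas_le
    ((volume.restrict (Set.Icc a b)).withDensity (fun x => ENNReal.ofReal (f x)))
    (f := h) (Filter.Eventually.of_forall h0) hc.measurable.aemeasurable
  rw [lintegral_withDensity_eq_lintegral_mul₀ hF hc.measurable.ennreal_ofReal.aemeasurable] at key
  rw [ofReal_integral_eq_lintegral_ofReal hi]
  · convert key using 1
    · refine lintegral_congr_ae ?_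
      filter_upwards [ae_restrict_mem measurableSet_Icc] with x hx
      rw [Pi.mul_apply, ENNReal.ofReal_mul (h0 x), mul_comm]
    · congr 1
      ext t
      have hm : MeasurableSet {x | t ≤ h x} := measurableSet_le measurable_const hc.measurable
      rw [withDensity_apply _ hm, Measure.restrict_restrict hm,
        ofReal_integral_eq_lintegral_ofReal (hfi.mono_set Set.inter_subset_right)]
      filter_upwards [ae_restrict_mem (hm.inter measurableSet_Icc)] with x hx
      exact (hf x hx.2).le
  · filter_upwards [ae_restrict_mem measurableSet_Icc] with x hx
    exact mul_nonneg (h0 x) (hf x hx).le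

lemma fosd_nonneg (a b : ℝ) (fz fy : ℝ → ℝ)
    (hfz : ∀ x ∈ Set.Icc a b, 0 < fz x) (hfy : ∀ x ∈ Set.Icc a b, 0 < fy x)
    (hfzint : IntegrableOn fz (Set.Icc a b)) (hfyint : IntegrableOn fy (Set.Icc a b))
    (hfosd : ∀ t ∈ Set.Icc a b,
      ∫ x in Set.Icc t b, fz x ≤ ∫ x in Set.Icc t b, fy x)
    (h : ℝ → ℝ) (hc : Continuous h) (hm : Monotone h) (h0 : ∀ x, 0 ≤ h x) :
    ∫ x in Set.Icc a b, h x * fz x ≤ ∫ x in Set.Icc a b, h x * fy x := by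
  have hy : 0 ≤ ∫ x in Set.Icc a b, h x * fy x :=
    setIntegral_nonneg measurableSet_Icc fun x hx => mul_nonneg (h0 x) (hfy x hx).le
  rw [← ENNReal.ofReal_le_ofReal_iff hy, lint_fosd a b fz hfz hfzint h hc h0,
    lint_fosd a b fy hfy hfyint h hc h0]
  refine lintegral_mono fun t => ENNReal.ofReal_le_ofReal ?_
  rcases Set.eq_empty_or_nonempty ({x | t ≤ h x} ∩ Set.Icc a b) with he | hne
  · simp [he]
  · have hcomp : IsCompact ({x | t ≤ h x} ∩ Set.Icc a b) :=
      isCompact_Icc.inter_left (isClosed_le continuous_const hc)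
    obtain ⟨t0, ht0, hl⟩ := hcomp.exists_isLeast hne
    have : {x | t ≤ h x} ∩ Set.Icc a b = Set.Icc t0 b := by
      ext x
      constructor
      · intro hx
        exact ⟨hl hx, hx.2.2⟩
      · intro hx
        exact ⟨le_trans ht0.1 (hm hx.1), ht0.2.1.trans hx.1, hx.2⟩
    rw [this]
    exact hfosd t0 ht0.2

lemma supergrad (u : ℝ → ℝ) (hu : ConcaveOn ℝ Set.univ u) (hm : StrictMono u) (c : ℝ) :
    ∃ s > 0, (∀ p q, c ≤ p → p ≤ q → u q - u p ≤ s * (q - p)) ∧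
      (∀ p q, q ≤ p → p ≤ c → u q - u p ≤ s * (q - p)) := by
  have slope : ∀ x y z, x < y → y < z → (u z - u y) / (z - y) ≤ (u y - u x) / (y - x) :=
    fun x y z h1 h2 => hu.slope_anti_adjacent (Set.mem_univ _) (Set.mem_univ _) h1 h2
  let S := (fun y => (u y - u c) / (y - c)) '' Set.Ioi c
  have hb : BddAbove S := by
    refine ⟨(u c - u (c-1)) / (c - (c-1)), ?_⟩
    rintro _ ⟨y, hy, rfl⟩
    exact slope _ _ _ (by linarith) hy
  have hR : ∀ y, c < y → (u y - u c) / (y - c) ≤ sSup S := fun y hy => le_csSup hb ⟨y, hy, rfl⟩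
  have hL : ∀ y, y < c → sSup S ≤ (u c - u y) / (c - y) := by
    intro y hy
    refine csSup_le ⟨_, c+1, by simp, rfl⟩ ?_
    rintro _ ⟨z, hz, rfl⟩
    exact slope _ _ _ hy hz
  refine ⟨sSup S, ?_, ?_, ?_⟩
  · have := hR (c+1) (by linarith)
    have h2 := hm (show c < c + 1 by linarith)
    simp at this
    linarith
  · intro p q hp hq
    rcases hq.eq_or_lt with rfl | hq
    · simp
    rw [← div_le_iff₀ (by linarith)]
    rcases hp.eq_or_lt with rfl | hp
    · exact hR q hq
    · exact (slope _ _ _ hp hq).trans (hR p hp)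
  · intro p q hq hp
    rcases hq.eq_or_lt with rfl | hq
    · simp
    have : sSup S ≤ (u p - u q) / (p - q) := by
      rcases hp.eq_or_lt with rfl | hp
      · exact hL q hq
      · exact (hL p hp).trans (slope _ _ _ hq hp)
    rw [le_div_iff₀ (by linarith)] at this
    linarith

/-- Ex-post form of the revenue ranking under PD-FOSD (Proposition 4.2): with break-even bids
at the density `f_z` and first-order stochastic dominance of `f_y` over `f_z`, the strongly
steeper security `φ` (i.e. `φ − ψ` nondecreasing) yields a weakly larger expected payment
under the density `f_y`. -/
theorem revenue_ranking_strong_steepness_fosd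
    (a b : ℝ) (hab : a < b) (I : ℝ)
    (fz fy : ℝ → ℝ)
    (hfz : ∀ x ∈ Set.Icc a b, 0 < fz x) (hfy : ∀ x ∈ Set.Icc a b, 0 < fy x)
    (hfzint : IntegrableOn fz (Set.Icc a b)) (hfyint : IntegrableOn fy (Set.Icc a b))
    (hfzone : ∫ x in Set.Icc a b, fz x = 1) (hfyone : ∫ x in Set.Icc a b, fy x = 1)
    (hfosd : ∀ t ∈ Set.Icc a b,
      ∫ x in Set.Icc t b, fz x ≤ ∫ x in Set.Icc t b, fy x)
    (u : ℝ → ℝ) (huconc : ConcaveOn ℝ Set.univ u) (humono : StrictMono u)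
    (φ ψ : ℝ → ℝ)
    (hφcont : ContinuousOn φ (Set.Icc a b)) (hψcont : ContinuousOn ψ (Set.Icc a b))
    (hφmono : MonotoneOn φ (Set.Icc a b)) (hψmono : MonotoneOn ψ (Set.Icc a b))
    (hφprofit : MonotoneOn (fun x => x - φ x) (Set.Icc a b))
    (hψprofit : MonotoneOn (fun x => x - ψ x) (Set.Icc a b))
    (hstrong : MonotoneOn (fun x => φ x - ψ x) (Set.Icc a b))
    (hint₁ : IntegrableOn (fun x => u (x - I - φ x) * fz x) (Set.Icc a b))
    (hint₂ : IntegrableOn (fun x => u (x - I - ψ x) * fz x) (Set.Icc a b))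
    (hint₃ : IntegrableOn (fun x => φ x * fz x) (Set.Icc a b))
    (hint₄ : IntegrableOn (fun x => ψ x * fz x) (Set.Icc a b))
    (hint₅ : IntegrableOn (fun x => φ x * fy x) (Set.Icc a b))
    (hint₆ : IntegrableOn (fun x => ψ x * fy x) (Set.Icc a b))
    (heqφ : ∫ x in Set.Icc a b, u (x - I - φ x) * fz x = 0)
    (heqψ : ∫ x in Set.Icc a b, u (x - I - ψ x) * fz x = 0) :
    ∫ x in Set.Icc a b, ψ x * fy x ≤ ∫ x in Set.Icc a b, φ x * fy x := by
  have hgc : ContinuousOn (fun x => φ x - ψ x) (Set.Icc a b) := hφcont.sub hψcont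
  have haI : a ∈ Set.Icc a b := Set.left_mem_Icc.2 hab.le
  have hbI : b ∈ Set.Icc a b := Set.right_mem_Icc.2 hab.le
  rcases le_or_gt 0 (φ a - ψ a) with hpos | hneg
  · refine setIntegral_mono_on hint₆ hint₅ measurableSet_Icc fun x hx => ?_
    have h1 : φ a - ψ a ≤ φ x - ψ x := hstrong haI hx hx.1
    exact mul_le_mul_of_nonneg_right (by linarith) (hfy x hx).le
  rcases lt_or_ge (φ b - ψ b) 0 with hneg' | hpos'
  · exfalso
    have hlt : ∀ x ∈ Set.Icc a b, 0 < u (x - I - φ x) * fz x - u (x - I - ψ x) * fz x := by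
      intro x hx
      have h1 : φ x - ψ x ≤ φ b - ψ b := hstrong hx hbI hx.2
      have h2 := humono (show x - I - ψ x < x - I - φ x by linarith)
      have h3 := mul_lt_mul_of_pos_right h2 (hfz x hx)
      linarith
    have hi := hint₁.sub hint₂
    have h0 : ∫ x in Set.Icc a b, (u (x - I - φ x) * fz x - u (x - I - ψ x) * fz x) = 0 := by
      rw [integral_sub hint₁ hint₂, heqφ, heqψ, sub_zero]
    have hp := (setIntegral_pos_iff_support_of_nonneg_ae (μ := volume) (s := Set.Icc a b)
      (f := fun x => u (x - I - φ x) * fz x - u (x - I - ψ x) * fz x)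
      (by filter_upwards [ae_restrict_mem measurableSet_Icc] with x hx
          exact (hlt x hx).le) hi).2 (by
        refine lt_of_lt_of_le (b := volume (Set.Icc a b)) (by simp [hab]) (measure_mono ?_)
        exact fun x hx => ⟨(hlt x hx).ne', hx⟩)
    linarith
  obtain ⟨c, hcI, hc⟩ := intermediate_value_Icc hab.le hgc (show (0:ℝ) ∈ Set.Icc _ _ from ⟨hneg.le, hpos'⟩)
  simp only at hc
  obtain ⟨s, hs, hsR, hsL⟩ := supergrad u huconc humono (c - I - φ c)
  have hptw : ∀ x ∈ Set.Icc a b,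
      u (x - I - ψ x) * fz x - u (x - I - φ x) * fz x ≤ s * (φ x * fz x - ψ x * fz x) := by
    intro x hx
    have h1 : u (x - I - ψ x) - u (x - I - φ x) ≤ s * ((x - I - ψ x) - (x - I - φ x)) := by
      rcases le_total c x with h | h
      · have h2 : φ c - ψ c ≤ φ x - ψ x := hstrong hcI hx h
        have h3 : c - φ c ≤ x - φ x := hφprofit hcI hx h
        exact hsR _ _ (by linarith) (by linarith)
      · have h2 : φ x - ψ x ≤ φ c - ψ c := hstrong hx hcI h
        have h3 : x - φ x ≤ c - φ c := hφprofit hx hcI h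
        exact hsL _ _ (by linarith) (by linarith)
    have := mul_le_mul_of_nonneg_right h1 (hfz x hx).le
    linarith
  have hz : 0 ≤ ∫ x in Set.Icc a b, (φ x * fz x - ψ x * fz x) := by
    have h1 := setIntegral_mono_on (hint₂.sub hint₁) ((hint₃.sub hint₄).const_mul s)
      measurableSet_Icc hptw
    simp only [Pi.sub_apply] at h1
    rw [integral_const_mul, integral_sub hint₂ hint₁, heqφ, heqψ, sub_zero] at h1
    exact nonneg_of_mul_nonneg_right h1 hs
  let g : ℝ → ℝ := fun x => φ x - ψ x
  let h : ℝ → ℝ := fun x => g (max a (min b x)) - g a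
  have hmem : ∀ x, max a (min b x) ∈ Set.Icc a b := fun x =>
    ⟨le_max_left _ _, max_le hab.le (min_le_left _ _)⟩
  have hcont : Continuous h :=
    (hgc.comp_continuous (by fun_prop) hmem).sub continuous_const
  have hmono : Monotone h := fun x y hxy =>
    sub_le_sub_right (hstrong (hmem x) (hmem y) (max_le_max le_rfl (min_le_min le_rfl hxy))) _
  have hnn : ∀ x, 0 ≤ h x := fun x => sub_nonneg.2 (hstrong haI (hmem x) (hmem x).1)
  have main := fosd_nonneg a b fz fy hfz hfy hfzint hfyint hfosd h hcont hmono hnn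
  have hcalc : ∀ f : ℝ → ℝ, IntegrableOn f (Set.Icc a b) → ∫ x in Set.Icc a b, f x = 1 →
      IntegrableOn (fun x => φ x * f x) (Set.Icc a b) →
      IntegrableOn (fun x => ψ x * f x) (Set.Icc a b) →
      ∫ x in Set.Icc a b, h x * f x =
        (∫ x in Set.Icc a b, (φ x * f x - ψ x * f x)) - g a := by
    intro f hf h1 hA hB
    have : ∫ x in Set.Icc a b, h x * f x =
        ∫ x in Set.Icc a b, ((φ x * f x - ψ x * f x) - g a * f x) := by
      refine setIntegral_congr_fun measurableSet_Icc fun x hx => ?_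
      simp only [h, g, min_eq_right hx.2, max_eq_right hx.1]
      ring
    have hAB : IntegrableOn (fun x => φ x * f x - ψ x * f x) (Set.Icc a b) := hA.sub hB
    rw [this, integral_sub hAB (hf.const_mul _), integral_const_mul, h1, mul_one]
  rw [hcalc fz hfzint hfzone hint₃ hint₄, hcalc fy hfyint hfyone hint₅ hint₆] at main
  rw [integral_sub hint₅ hint₆] at main
  linarith
end

section
/- For y ∈ [0,1], define f(x, y) = 1 − y + 6xy for 0 ≤ x ≤ 1/3 and f(x, y) = 1 for 1/3 < x ≤ 1. Then for all ŷ, y with 0 ≤ ŷ < y ≤ 1, the likelihood ratio x ↦ f(x, y)/f(x, ŷ) is not nondecreasing on [0,1]: there exist x, x' with 0 ≤ x < x' ≤ 1 and f(x, y)/f(x, ŷ) > f(x', y)/f(x', ŷ). Indeed, f(x, y)/f(x, ŷ) > 1 for every x ∈ (1/6, 1/3], while f(x', y)/f(x', ŷ) = 1 for every x' ∈ (1/3, 1]. -/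
open MeasureTheory

/-- The conditional density of the value given the signal `y` in Example 4.1. -/
noncomputable def exDensity (x y : ℝ) : ℝ :=
  if x ≤ 1 / 3 then 1 - y + 6 * x * y else 1

/-- In Example 4.1, the MLR property fails: for `ŷ < y` the likelihood ratio
`x ↦ f(x,y)/f(x,ŷ)` is not nondecreasing on `[0,1]`; indeed it exceeds `1` on `(1/6, 1/3]`
and equals `1` on `(1/3, 1]`. -/
theorem example_density_mlr_fails :
    ∀ yhat y : ℝ, 0 ≤ yhat → yhat < y → y ≤ 1 →
      (¬ MonotoneOn (fun x => exDensity x y / exDensity x yhat) (Set.Icc (0:ℝ) 1)) ∧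
      (∃ x x' : ℝ, 0 ≤ x ∧ x < x' ∧ x' ≤ 1 ∧
        exDensity x' y / exDensity x' yhat < exDensity x y / exDensity x yhat) ∧
      (∀ x ∈ Set.Ioc (1/6 : ℝ) (1/3), 1 < exDensity x y / exDensity x yhat) ∧
      (∀ x' ∈ Set.Ioc (1/3 : ℝ) 1, exDensity x' y / exDensity x' yhat = 1) := by
  intro yhat y h0 h1 h2
  have hA : ∀ x ∈ Set.Ioc (1/6 : ℝ) (1/3), 1 < exDensity x y / exDensity x yhat := by
    rintro x ⟨hx1, hx2⟩
    unfold exDensity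
    rw [if_pos hx2, if_pos hx2]
    have hpos : 0 < 1 - yhat + 6 * x * yhat := by nlinarith
    rw [one_lt_div hpos]
    nlinarith
  have hB : ∀ x' ∈ Set.Ioc (1/3 : ℝ) 1, exDensity x' y / exDensity x' yhat = 1 := by
    rintro x ⟨hx1, hx2⟩
    unfold exDensity
    rw [if_neg (not_le.mpr hx1), if_neg (not_le.mpr hx1), div_one]
  have h3 := hA (1/3) (by constructor <;> norm_num)
  have h4 := hB 1 (by constructor <;> norm_num)
  refine ⟨?_, ⟨1/3, 1, by norm_num, by norm_num, le_refl _, by rw [h4]; exact h3⟩, hA, hB⟩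
  intro hm
  have h5 := hm (a := 1/3) (b := 1) (by constructor <;> norm_num)
    (by constructor <;> norm_num) (by norm_num)
  simp only [h4] at h5
  exact absurd h3 (not_lt.mpr h5)
end

section
/- For y ∈ [0,1], define f(x, y) = 1 − y + 6xy for 0 ≤ x ≤ 1/3 and f(x, y) = 1 for 1/3 < x ≤ 1. Then for every bᵉ ∈ ℝ, every b^d with 1/3 ≤ b^d ≤ 1, and every y₁, y₂ ∈ [0,1], one has ∫₀¹ ( bᵉ·t − min(t, b^d) ) ( f(t, y₁) − f(t, y₂) ) dt = (bᵉ − 1)(y₁ − y₂)/54. In particular, if bᵉ < 1 and y₁ > y₂ this integral is strictly negative. -/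
open MeasureTheory intervalIntegral

/-- Key computation in the proof of Proposition 4.1:
`∫₀¹ (bᵉ t − min(t, b^d)) (f(t,y₁) − f(t,y₂)) dt = (bᵉ − 1)(y₁ − y₂)/54` whenever
`1/3 ≤ b^d ≤ 1`; in particular the integral is strictly negative when `bᵉ < 1` and
`y₁ > y₂`. -/
theorem example_equity_minus_debt_integral
    (be bd : ℝ) (hbd : 1/3 ≤ bd) (hbd' : bd ≤ 1)
    (y₁ y₂ : ℝ) (hy₁ : y₁ ∈ Set.Icc (0:ℝ) 1) (hy₂ : y₂ ∈ Set.Icc (0:ℝ) 1) :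
    (∫ t in (0:ℝ)..1, (be * t - min t bd) * (exDensity t y₁ - exDensity t y₂))
      = (be - 1) * (y₁ - y₂) / 54 ∧
    (be < 1 → y₂ < y₁ →
      (∫ t in (0:ℝ)..1, (be * t - min t bd) * (exDensity t y₁ - exDensity t y₂)) < 0) := by
  have e1 : Set.EqOn (fun t : ℝ => (be - 1) * (y₁ - y₂) * (6 * t ^ 2 - t))
      (fun t => (be * t - min t bd) * (exDensity t y₁ - exDensity t y₂))
      (Set.uIoc 0 (1 / 3)) := by
    intro t ht
    rw [Set.uIoc_of_le (by norm_num)] at ht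
    have h2 : t ≤ 1 / 3 := ht.2
    simp only [exDensity, if_pos h2, min_eq_left (h2.trans hbd)]
    ring
  have e2 : Set.EqOn (fun _ : ℝ => (0 : ℝ))
      (fun t => (be * t - min t bd) * (exDensity t y₁ - exDensity t y₂))
      (Set.uIoc (1 / 3) 1) := by
    intro t ht
    rw [Set.uIoc_of_le (by norm_num)] at ht
    simp only [exDensity, if_neg (not_le.mpr ht.1)]
    ring
  have i0 : IntervalIntegrable (fun t : ℝ => (be - 1) * (y₁ - y₂) * (6 * t ^ 2 - t))
      volume 0 (1 / 3) := Continuous.intervalIntegrable (by fun_prop) _ _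
  have i1 := i0.congr e1
  have i2 := (IntervalIntegrable.zero (E := ℝ) (μ := volume) (a := 1 / 3) (b := 1)).congr e2
  have key : (∫ t in (0:ℝ)..1, (be * t - min t bd) * (exDensity t y₁ - exDensity t y₂))
      = (be - 1) * (y₁ - y₂) / 54 := by
    rw [← integral_add_adjacent_intervals i1 i2,
      ← intervalIntegral.integral_congr_ae (ae_of_all _ fun t ht => e1 ht), ← intervalIntegral.integral_congr_ae (ae_of_all _ fun t ht => e2 ht),
      intervalIntegral.integral_const_mul, intervalIntegral.integral_sub
        (Continuous.intervalIntegrable (by fun_prop) _ _)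
        (Continuous.intervalIntegrable (by fun_prop) _ _),
      intervalIntegral.integral_const_mul, integral_pow, integral_id,
      intervalIntegral.integral_zero]
    norm_num
    ring
  refine ⟨key, fun h1 h2 => ?_⟩
  rw [key]
  have := mul_pos (sub_pos.mpr h1) (sub_pos.mpr h2)
  linarith
end

section
/- For y ∈ [0,1], define f(x, y) = 1 − y + 6xy for 0 ≤ x ≤ 1/3 and f(x, y) = 1 for 1/3 < x ≤ 1. Fix I with 0 < I < 2/9 and y ∈ [0,1]. Then: (i) if b ∈ [0,1] satisfies ∫₀¹ ( t − I − min(t, b) ) f(t, y) dt = 0, then b > 1/3; and (ii) if b ∈ ℝ satisfies ∫₀¹ ( t − I − b·t ) f(t, y) dt = 0, then b < 1. -/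
open MeasureTheory intervalIntegral

lemma exDensity_integral_split (y : ℝ) (g : ℝ → ℝ) (hg : Continuous g) :
    (∫ t in (0:ℝ)..1, g t * exDensity t y) =
      (∫ t in (0:ℝ)..(1/3), g t * (1 - y + 6 * t * y)) + ∫ t in (1/3:ℝ)..1, g t := by
  have e1 : Set.EqOn (fun t => g t * (1 - y + 6 * t * y)) (fun t => g t * exDensity t y)
      (Set.uIoc (0:ℝ) (1/3)) := by
    intro t ht
    rw [Set.uIoc_of_le (by norm_num)] at ht
    simp only [exDensity, if_pos ht.2]
  have e2 : Set.EqOn g (fun t => g t * exDensity t y) (Set.uIoc (1/3:ℝ) 1) := by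
    intro t ht
    rw [Set.uIoc_of_le (by norm_num)] at ht
    simp only [exDensity, if_neg (not_le.mpr ht.1), mul_one]
  have c1 : Continuous (fun t => g t * (1 - y + 6 * t * y)) := by fun_prop
  have i1 := (c1.intervalIntegrable (μ := volume) 0 (1/3)).congr e1
  have i2 := (hg.intervalIntegrable (μ := volume) (1/3) 1).congr e2
  rw [← integral_add_adjacent_intervals i1 i2]
  congr 1
  · exact integral_congr_ae (Filter.Eventually.of_forall fun t ht => (e1 ht).symm)
  · exact integral_congr_ae (Filter.Eventually.of_forall fun t ht => (e2 ht).symm)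

lemma ex_base (I y c : ℝ) : (∫ t in (0:ℝ)..(1/3), (-I) * (1 - y + 6 * t * y)) = -I/3 ∧
    (∫ t in (1/3:ℝ)..1, (t - c)) = 4/9 - 2/3*c := by
  constructor
  · have : ∀ t ∈ Set.uIcc (0:ℝ) (1/3), HasDerivAt (fun t => (-I) * ((1-y)*t + 3*y*t^2))
        ((-I) * (1 - y + 6 * t * y)) t := by
      intro t _
      have := ((((hasDerivAt_id t).const_mul (1-y)).add
        (((hasDerivAt_id t).pow 2).const_mul (3*y))).const_mul (-I))
      exact this.congr_deriv (by simp only [id]; push_cast; ring)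
    rw [integral_eq_sub_of_hasDerivAt this (Continuous.intervalIntegrable (by fun_prop) _ _)]
    ring
  · rw [integral_sub (Continuous.intervalIntegrable (by fun_prop) _ _)
      (Continuous.intervalIntegrable (by fun_prop) _ _)]
    simp; ring

/-- Bounds on the break-even bids in Example 4.1 for `0 < I < 2/9`:
(i) the break-even debt bid exceeds `1/3`; (ii) the break-even equity bid is below `1`. -/
theorem example_breakeven_bid_bounds
    (I : ℝ) (hI₀ : 0 < I) (hI₁ : I < 2/9)
    (y : ℝ) (hy : y ∈ Set.Icc (0:ℝ) 1) :
    (∀ b ∈ Set.Icc (0:ℝ) 1,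
      (∫ t in (0:ℝ)..1, (t - I - min t b) * exDensity t y) = 0 → 1/3 < b) ∧
    (∀ b : ℝ,
      (∫ t in (0:ℝ)..1, (t - I - b * t) * exDensity t y) = 0 → b < 1) := by
  obtain ⟨hy0, hy1⟩ := hy
  have hd : ∀ t ∈ Set.Icc (0:ℝ) (1/3), 0 ≤ 1 - y + 6 * t * y := by
    intro t ht
    have := mul_nonneg ht.1 hy0
    nlinarith
  constructor
  · intro b hb h
    by_contra hlt
    push Not at hlt
    rw [exDensity_integral_split y (fun t => t - I - min t b) (by fun_prop)] at h
    have h1 : (∫ t in (0:ℝ)..(1/3), (-I) * (1 - y + 6 * t * y)) ≤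
        ∫ t in (0:ℝ)..(1/3), (t - I - min t b) * (1 - y + 6 * t * y) := by
      apply integral_mono_on (by norm_num) (Continuous.intervalIntegrable (by fun_prop) _ _)
        (Continuous.intervalIntegrable (by fun_prop) _ _)
      intro t ht
      exact mul_le_mul_of_nonneg_right (by linarith [min_le_left t b]) (hd t ht)
    have h2 : (∫ t in (1/3:ℝ)..1, (t - (I + 1/3))) ≤ ∫ t in (1/3:ℝ)..1, (t - I - min t b) := by
      apply integral_mono_on (by norm_num) (Continuous.intervalIntegrable (by fun_prop) _ _)
        (Continuous.intervalIntegrable (by fun_prop) _ _)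
      intro t ht
      linarith [min_le_right t b]
    rw [(ex_base I y 0).1] at h1
    rw [(ex_base I y _).2] at h2
    linarith
  · intro b h
    by_contra hlt
    push Not at hlt
    rw [exDensity_integral_split y (fun t => t - I - b * t) (by fun_prop)] at h
    have h1 : (∫ t in (0:ℝ)..(1/3), (t - I - b * t) * (1 - y + 6 * t * y)) ≤
        ∫ t in (0:ℝ)..(1/3), (-I) * (1 - y + 6 * t * y) := by
      apply integral_mono_on (by norm_num) (Continuous.intervalIntegrable (by fun_prop) _ _)
        (Continuous.intervalIntegrable (by fun_prop) _ _)
      intro t ht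
      exact mul_le_mul_of_nonneg_right (by nlinarith [ht.1]) (hd t ht)
    have h2 : (∫ t in (1/3:ℝ)..1, (t - I - b * t)) ≤ ∫ t in (1/3:ℝ)..1, (-I) := by
      apply integral_mono_on (by norm_num) (Continuous.intervalIntegrable (by fun_prop) _ _)
        (Continuous.intervalIntegrable (by fun_prop) _ _)
      intro t ht
      nlinarith [ht.1]
    rw [(ex_base I y 0).1] at h1
    rw [intervalIntegral.integral_const, smul_eq_mul] at h2
    linarith
end

section
/- For y ∈ [0,1], define f(x, y) = 1 − y + 6xy for 0 ≤ x ≤ 1/3 and f(x, y) = 1 for 1/3 < x ≤ 1. Fix I with 0 < I < 2/9 and signals y₁, y₂ with 0 ≤ y₂ < y₁ ≤ 1. Suppose bᵉ ∈ [0,1] satisfies ∫₀¹ ( t − I − bᵉ·t ) f(t, y₂) dt = 0 and b^d ∈ [0,1] satisfies ∫₀¹ ( t − I − min(t, b^d) ) f(t, y₂) dt = 0. Then ∫₀¹ bᵉ·t · f(t, y₁) dt < ∫₀¹ min(t, b^d) · f(t, y₁) dt; that is, the seller's expected revenue from the debt security strictly exceeds that from the equity security. -/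
open MeasureTheory intervalIntegral

lemma ex_split (h : ℝ → ℝ) (hh : Continuous h) (y : ℝ) :
    (∫ t in (0:ℝ)..1, h t * exDensity t y)
      = (∫ t in (0:ℝ)..(1/3), h t * (1 - y + 6 * t * y)) + ∫ t in (1/3:ℝ)..1, h t := by
  have e1 : Set.EqOn (fun t => h t * (1 - y + 6 * t * y)) (fun t => h t * exDensity t y)
      (Set.uIoc (0:ℝ) (1/3)) := by
    intro t ht
    rw [Set.uIoc_of_le (by norm_num)] at ht
    simp only [exDensity]
    rw [if_pos ht.2]
  have e2 : Set.EqOn (fun t => h t) (fun t => h t * exDensity t y)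
      (Set.uIoc (1/3:ℝ) 1) := by
    intro t ht
    rw [Set.uIoc_of_le (by norm_num)] at ht
    simp only [exDensity]
    rw [if_neg (not_le.mpr ht.1), mul_one]
  have i1 : IntervalIntegrable (fun t => h t * (1 - y + 6 * t * y)) volume 0 (1/3) :=
    Continuous.intervalIntegrable (by fun_prop) _ _
  have i2 : IntervalIntegrable (fun t => h t) volume (1/3) 1 :=
    Continuous.intervalIntegrable (by fun_prop) _ _
  rw [← integral_add_adjacent_intervals (i1.congr e1) (i2.congr e2)]
  congr 1
  · exact integral_congr_ae (Filter.Eventually.of_forall fun t ht => (e1 ht).symm)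
  · exact integral_congr_ae (Filter.Eventually.of_forall fun t ht => (e2 ht).symm)

lemma ex_quad (a b p q r : ℝ) :
    (∫ t in a..b, (p + q * t + r * t ^ 2))
      = p * (b - a) + q * ((b ^ 2 - a ^ 2) / 2) + r * ((b ^ 3 - a ^ 3) / 3) := by
  have : ∀ x ∈ Set.uIcc a b, HasDerivAt (fun t : ℝ => p * t + q * (t ^ 2 / 2) + r * (t ^ 3 / 3))
      (p + q * x + r * x ^ 2) x := by
    intro x _
    have h1 := (hasDerivAt_id x).const_mul p
    have h2 := (((hasDerivAt_id x).pow 2).div_const 2).const_mul q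
    have h3 := (((hasDerivAt_id x).pow 3).div_const 3).const_mul r
    refine ((h1.add h2).add h3).congr_deriv ?_
    simp
  rw [integral_eq_sub_of_hasDerivAt this (Continuous.intervalIntegrable (by fun_prop) _ _)]
  ring

lemma ex_quad' (f : ℝ → ℝ) (a b p q r : ℝ) (hab : a ≤ b)
    (hf : ∀ t, a ≤ t → t ≤ b → f t = p + q * t + r * t ^ 2) :
    (∫ t in a..b, f t)
      = p * (b - a) + q * ((b ^ 2 - a ^ 2) / 2) + r * ((b ^ 3 - a ^ 3) / 3) := by
  rw [← ex_quad]
  apply integral_congr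
  intro t ht
  rw [Set.uIcc_of_le hab] at ht
  exact hf t ht.1 ht.2

/-- Proposition 4.1 (revenue-ranking reversal): in Example 4.1, with `0 < I < 2/9` and signals
`y₂ < y₁`, if `bᵉ` and `b^d` are the break-even equity and debt bids at the signal `y₂`, then
the seller's expected revenue from the debt security strictly exceeds that from the equity
security. -/
theorem example_debt_beats_equity
    (I : ℝ) (hI₀ : 0 < I) (hI₁ : I < 2/9)
    (y₁ y₂ : ℝ) (hy₂ : 0 ≤ y₂) (hy : y₂ < y₁) (hy₁ : y₁ ≤ 1)
    (be bd : ℝ) (hbe : be ∈ Set.Icc (0:ℝ) 1) (hbd : bd ∈ Set.Icc (0:ℝ) 1)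
    (heqe : (∫ t in (0:ℝ)..1, (t - I - be * t) * exDensity t y₂) = 0)
    (heqd : (∫ t in (0:ℝ)..1, (t - I - min t bd) * exDensity t y₂) = 0) :
    (∫ t in (0:ℝ)..1, be * t * exDensity t y₁)
      < ∫ t in (0:ℝ)..1, min t bd * exDensity t y₁ := by
  have hy21 : y₂ ≤ 1 := by linarith
  rw [ex_split (fun t => t - I - be * t) (by fun_prop)] at heqe
  rw [ex_split (fun t => t - I - min t bd) (by fun_prop)] at heqd
  rw [ex_split (fun t => be * t) (by fun_prop), ex_split (fun t => min t bd) (by fun_prop)]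
  rw [ex_quad' _ 0 (1/3) (-I * (1 - y₂)) ((1 - be) * (1 - y₂) - 6 * I * y₂) ((1 - be) * 6 * y₂)
      (by norm_num) (by intros; ring),
    ex_quad' _ (1/3) 1 (-I) (1 - be) 0 (by norm_num) (by intros; ring)] at heqe
  rw [ex_quad' (fun t => be * t * _) 0 (1/3) 0 (be * (1 - y₁)) (be * 6 * y₁)
      (by norm_num) (by intros; ring),
    ex_quad' (fun t => be * t) (1/3) 1 0 be 0 (by norm_num) (by intros; ring)]
  have hb : 1 / 3 ≤ bd := by
    by_contra hlt
    push Not at hlt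
    have l1 : (∫ t in (0:ℝ)..(1/3), (-I) * (1 - y₂ + 6 * t * y₂))
        ≤ ∫ t in (0:ℝ)..(1/3), (t - I - min t bd) * (1 - y₂ + 6 * t * y₂) := by
      apply integral_mono_on (by norm_num)
      · exact Continuous.intervalIntegrable (by fun_prop) _ _
      · exact Continuous.intervalIntegrable (by fun_prop) _ _
      · intro t ht
        have := min_le_left t bd
        have : 0 ≤ t * y₂ := mul_nonneg ht.1 hy₂
        apply mul_le_mul_of_nonneg_right <;> linarith
    have l2 : (∫ t in (1/3:ℝ)..1, (t - I - 1/3)) ≤ ∫ t in (1/3:ℝ)..1, (t - I - min t bd) := by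
      apply integral_mono_on (by norm_num)
      · exact Continuous.intervalIntegrable (by fun_prop) _ _
      · exact Continuous.intervalIntegrable (by fun_prop) _ _
      · intro t ht
        have := min_le_right t bd
        linarith
    rw [ex_quad' _ 0 (1/3) (-I * (1 - y₂)) (-I * 6 * y₂) 0 (by norm_num) (by intros; ring)] at l1
    rw [ex_quad' _ (1/3) 1 (-I - 1/3) 1 0 (by norm_num) (by intros; ring)] at l2
    nlinarith
  have hsub : (∫ t in (1/3:ℝ)..1, (t - I - min t bd))
      = (∫ t in (1/3:ℝ)..1, (t - I)) - ∫ t in (1/3:ℝ)..1, min t bd :=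
    integral_sub (Continuous.intervalIntegrable (by fun_prop) _ _)
      (Continuous.intervalIntegrable (by fun_prop) _ _)
  rw [ex_quad' (fun t => t - I) (1/3) 1 (-I) 1 0 (by norm_num) (by intros; ring)] at hsub
  rw [hsub, ex_quad' _ 0 (1/3) (-I * (1 - y₂)) (-I * 6 * y₂) 0 (by norm_num)
    (by intro t _ h; simp only [min_eq_left (h.trans hb)]; ring)] at heqd
  rw [ex_quad' (fun t => min t bd * _) 0 (1/3) 0 (1 - y₁) (6 * y₁) (by norm_num)
    (by intro t _ h; simp only [min_eq_left (h.trans hb)]; ring)]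
  have h1 : (1 - be) * (1 / 2 + y₂ / 54) = I := by linarith
  have h2 : be < 1 := by
    by_contra hc
    push Not at hc
    nlinarith
  have h3 : 0 < (1 - be) * (y₁ - y₂) := mul_pos (by linarith) (by linarith)
  nlinarith
end

section
/- Let x̄ > 0, b' ∈ [0,1], and b̂ ∈ [0, x̄]. Then the function g : [0, x̄] → ℝ defined by g(w) = b'·w − min(w, b̂) is quasi-monotone: for all w, ŵ ∈ [0, x̄] with w > ŵ, g(ŵ) > 0 implies g(w) ≥ 0. -/
/-- Equity is steeper than debt: for an equity bid `b' ∈ [0,1]` and a debt bid `b̂ ∈ [0,x̄]`,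
the difference `w ↦ b'·w − min(w, b̂)` is quasi-monotone on `[0, x̄]`. -/
theorem equity_steeper_than_debt
    (xbar : ℝ) (hxbar : 0 < xbar)
    (b' : ℝ) (hb' : b' ∈ Set.Icc (0:ℝ) 1)
    (bhat : ℝ) (hbhat : bhat ∈ Set.Icc (0:ℝ) xbar) :
    ∀ w ∈ Set.Icc (0:ℝ) xbar, ∀ what ∈ Set.Icc (0:ℝ) xbar, what < w →
      0 < b' * what - min what bhat → 0 ≤ b' * w - min w bhat := by
  intro w hw what hwhat hlt hpos
  obtain ⟨hb0, hb1⟩ := hb'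
  have hle : b' * what ≤ what := mul_le_of_le_one_left hwhat.1 hb1
  have hmono : b' * what ≤ b' * w := mul_le_mul_of_nonneg_left hlt.le hb0
  have hmin : min w bhat ≤ bhat := min_le_right w bhat
  rcases le_total what bhat with h | h
  · rw [min_eq_left h] at hpos
    linarith
  · rw [min_eq_right h] at hpos
    linarith
end

section
/- Let x̄ > 0, b' ∈ [0, x̄], and b̂ ∈ [0,1]. Then the function g : [0, x̄] → ℝ defined by g(w) = max(w − x̄ + b', 0) − b̂·w is quasi-monotone: for all w, ŵ ∈ [0, x̄] with w > ŵ, g(ŵ) > 0 implies g(w) ≥ 0. -/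
/-- Call option is steeper than equity: for a call-option bid `b' ∈ [0,x̄]` and an equity bid
`b̂ ∈ [0,1]`, the difference `w ↦ max(w − x̄ + b', 0) − b̂·w` is quasi-monotone on `[0, x̄]`. -/
theorem call_option_steeper_than_equity
    (xbar : ℝ) (hxbar : 0 < xbar)
    (b' : ℝ) (hb' : b' ∈ Set.Icc (0:ℝ) xbar)
    (bhat : ℝ) (hbhat : bhat ∈ Set.Icc (0:ℝ) 1) :
    ∀ w ∈ Set.Icc (0:ℝ) xbar, ∀ what ∈ Set.Icc (0:ℝ) xbar, what < w →
      0 < max (what - xbar + b') 0 - bhat * what →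
        0 ≤ max (w - xbar + b') 0 - bhat * w := by
  obtain ⟨h0, h1⟩ := hbhat
  intro w hw v hv hvw h
  have hm : 0 ≤ bhat * v := mul_nonneg h0 hv.1
  have hl := le_max_left (w - xbar + b') 0
  rcases max_cases (v - xbar + b') 0 with ⟨he, _⟩ | ⟨he, _⟩
  · rw [he] at h
    have hp : 0 ≤ (1 - bhat) * (w - v) := mul_nonneg (by linarith) (by linarith)
    nlinarith
  · rw [he] at h
    linarith
end
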